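/- arXiv:0911.4703 — 5 statements merged into one kernel-verified Lean document; each statement's English description precedes it below -/
import Mathlib

section
/- For every admissible pair (φ,ψ) with J(φ,ψ) = 1 and every s > 0, E(φ,ψ;s) ≥ −g·k + (σ k²/2) ψ(0)² + s·E1(φ,ψ); moreover E1(φ,ψ) ≥ 0, so in particular E(φ,ψ;s) ≥ −g·k. -/
open Set MeasureTheory intervalIntegral Filter Topology

noncomputable section

namespace RT

/-- The piecewise integral `∫_{-m}^0 + ∫_0^ℓ`. -/
def pwInt (m l : ℝ) (f : ℝ → ℝ) : ℝ :=
  (∫ x in (-m)..(0:ℝ), f x) + ∫ x in (0:ℝ)..l, f x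

/-- `f` restricted to `[-m,0)` extends continuously to `[-m,0]`, and `f` restricted to
`(0,ℓ]` extends continuously to `[0,ℓ]`. -/
def PiecewiseCont (m l : ℝ) (f : ℝ → ℝ) : Prop :=
  (∃ F : ℝ → ℝ, ContinuousOn F (Icc (-m) 0) ∧ EqOn f F (Ico (-m) 0)) ∧
  (∃ F : ℝ → ℝ, ContinuousOn F (Icc 0 l) ∧ EqOn f F (Ioc 0 l))

/-- A profile function: the restriction to `[-m,0)` extends continuously to `[-m,0]`, and
the function is continuous on `[0,ℓ]` (hence right-continuous at `0`). -/
def Profile (m l : ℝ) (f : ℝ → ℝ) : Prop :=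
  (∃ F : ℝ → ℝ, ContinuousOn F (Icc (-m) 0) ∧ EqOn f F (Ico (-m) 0)) ∧
  ContinuousOn f (Icc 0 l)

/-- The four steady-state profiles `ρ0, p, ε0, δ0` with their positivity assumptions. -/
def ProfilesHyp (m l : ℝ) (ρ0 p ε0 δ0 : ℝ → ℝ) : Prop :=
  Profile m l ρ0 ∧ Profile m l p ∧ Profile m l ε0 ∧ Profile m l δ0 ∧
  (∀ x ∈ Icc (-m) l, 0 < ρ0 x) ∧ (∀ x ∈ Icc (-m) l, 0 < p x) ∧
  (∀ x ∈ Icc (-m) l, 0 < ε0 x) ∧ (∀ x ∈ Icc (-m) l, 0 ≤ δ0 x)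

/-- `f` is continuous on `[-m,ℓ]` and continuously differentiable on `[-m,0]` and on
`[0,ℓ]`, with piecewise derivative `fd`. -/
def PiecewiseC1 (m l : ℝ) (f fd : ℝ → ℝ) : Prop :=
  ContinuousOn f (Icc (-m) l) ∧
  (∀ x ∈ Ico (-m) 0, HasDerivWithinAt f (fd x) (Icc (-m) 0) x) ∧
  (∀ x ∈ Ioc 0 l, HasDerivWithinAt f (fd x) (Icc 0 l) x) ∧
  PiecewiseCont m l fd

/-- An admissible pair `(φ,ψ)` with piecewise derivatives `(φd,ψd)`. -/
def Admissible (m l : ℝ) (φ ψ φd ψd : ℝ → ℝ) : Prop :=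
  PiecewiseC1 m l φ φd ∧ PiecewiseC1 m l ψ ψd ∧
  φ (-m) = 0 ∧ φ l = 0 ∧ ψ (-m) = 0 ∧ ψ l = 0

/-- The energy `E(φ,ψ;s)`. -/
def energyE (m l g σ k : ℝ) (ρ0 p ε0 δ0 : ℝ → ℝ) (φ ψ φd ψd : ℝ → ℝ) (s : ℝ) : ℝ :=
  σ * k ^ 2 / 2 * (ψ 0) ^ 2
  + (1 / 2) * pwInt m l (fun x =>
      (s * δ0 x + p x * ρ0 x) * (ψd x + k * φ x) ^ 2 - 2 * g * ρ0 x * k * φ x * ψ x)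
  + (s / 2) * pwInt m l (fun x =>
      ε0 x * ((φd x - k * ψ x) ^ 2 + (ψd x - k * φ x) ^ 2
        + (1 / 3) * (ψd x + k * φ x) ^ 2))

/-- The normalization functional `J(φ,ψ)`. -/
def energyJ (m l : ℝ) (ρ0 : ℝ → ℝ) (φ ψ : ℝ → ℝ) : ℝ :=
  (1 / 2) * pwInt m l (fun x => ρ0 x * ((φ x) ^ 2 + (ψ x) ^ 2))

/-- The viscous part `E1(φ,ψ)` of the energy. -/
def energyE1 (m l k : ℝ) (ε0 δ0 : ℝ → ℝ) (φ ψ φd ψd : ℝ → ℝ) : ℝ :=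
  (1 / 2) * pwInt m l (fun x => (δ0 x + ε0 x / 3) * (ψd x + k * φ x) ^ 2)
  + (1 / 2) * pwInt m l (fun x =>
      ε0 x * ((φd x - k * ψ x) ^ 2 + (ψd x - k * φ x) ^ 2))

/-- `μ(s)`: the infimum of `E(·,·;s)` over admissible pairs with `J = 1`. -/
def muInf (m l g σ k : ℝ) (ρ0 p ε0 δ0 : ℝ → ℝ) (s : ℝ) : ℝ :=
  sInf { e : ℝ | ∃ φ ψ φd ψd : ℝ → ℝ, Admissible m l φ ψ φd ψd ∧
    energyJ m l ρ0 φ ψ = 1 ∧ e = energyE m l g σ k ρ0 p ε0 δ0 φ ψ φd ψd s }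

/-- The hydrostatic steady-state relation `ρ0' = -g ρ0 / p` on each piece. -/
def Hydrostatic (m l g : ℝ) (ρ0 p : ℝ → ℝ) : Prop :=
  (∀ x ∈ Ico (-m) 0, HasDerivWithinAt ρ0 (-g * ρ0 x / p x) (Ico (-m) 0) x) ∧
  (∀ x ∈ Ioc 0 l, HasDerivWithinAt ρ0 (-g * ρ0 x / p x) (Ioc 0 l) x)

end RT

namespace RT

theorem PiecewiseCont.comb {m l : ℝ} {f h : ℝ → ℝ} (op : ℝ → ℝ → ℝ)
    (hop : Continuous fun q : ℝ × ℝ => op q.1 q.2)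
    (hf : PiecewiseCont m l f) (hh : PiecewiseCont m l h) :
    PiecewiseCont m l (fun x => op (f x) (h x)) := by
  obtain ⟨⟨F, hF, hF'⟩, ⟨G, hG, hG'⟩⟩ := hf
  obtain ⟨⟨F2, hF2, hF2'⟩, ⟨G2, hG2, hG2'⟩⟩ := hh
  refine ⟨⟨fun x => op (F x) (F2 x), hop.comp_continuousOn (hF.prodMk hF2), ?_⟩,
    ⟨fun x => op (G x) (G2 x), hop.comp_continuousOn (hG.prodMk hG2), ?_⟩⟩
  · intro x hx
    simp only [hF' hx, hF2' hx]
  · intro x hx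
    simp only [hG' hx, hG2' hx]

theorem PiecewiseCont.add {m l : ℝ} {f h : ℝ → ℝ}
    (hf : PiecewiseCont m l f) (hh : PiecewiseCont m l h) :
    PiecewiseCont m l (fun x => f x + h x) := hf.comb (fun a b => a + b) (by fun_prop) hh

theorem PiecewiseCont.sub {m l : ℝ} {f h : ℝ → ℝ}
    (hf : PiecewiseCont m l f) (hh : PiecewiseCont m l h) :
    PiecewiseCont m l (fun x => f x - h x) := hf.comb (fun a b => a - b) (by fun_prop) hh

theorem PiecewiseCont.mul {m l : ℝ} {f h : ℝ → ℝ}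
    (hf : PiecewiseCont m l f) (hh : PiecewiseCont m l h) :
    PiecewiseCont m l (fun x => f x * h x) := hf.comb (fun a b => a * b) (by fun_prop) hh

theorem PiecewiseCont.sq {m l : ℝ} {f : ℝ → ℝ}
    (hf : PiecewiseCont m l f) :
    PiecewiseCont m l (fun x => f x ^ 2) := hf.comb (fun a _ => a ^ 2) (by fun_prop) hf

theorem PiecewiseCont.cmul {m l : ℝ} {f : ℝ → ℝ} (c : ℝ)
    (hf : PiecewiseCont m l f) :
    PiecewiseCont m l (fun x => c * f x) := hf.comb (fun a _ => c * a) (by fun_prop) hf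

theorem Profile.pc {m l : ℝ} {f : ℝ → ℝ} (hf : Profile m l f) : PiecewiseCont m l f :=
  ⟨hf.1, f, hf.2, fun _ _ => rfl⟩

theorem PiecewiseC1.pc {m l : ℝ} {f fd : ℝ → ℝ} (hm : 0 < m) (hl : 0 < l)
    (hf : PiecewiseC1 m l f fd) : PiecewiseCont m l f :=
  ⟨⟨f, hf.1.mono (Icc_subset_Icc le_rfl hl.le), fun _ _ => rfl⟩,
    ⟨f, hf.1.mono (Icc_subset_Icc (by linarith) le_rfl), fun _ _ => rfl⟩⟩

theorem PiecewiseCont.int {m l : ℝ} {f : ℝ → ℝ} (hm : 0 < m) (hl : 0 < l)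
    (hf : PiecewiseCont m l f) :
    IntervalIntegrable f volume (-m) 0 ∧ IntervalIntegrable f volume 0 l := by
  obtain ⟨⟨F, hF, hF'⟩, ⟨G, hG, hG'⟩⟩ := hf
  constructor
  · have h1 : IntervalIntegrable F volume (-m) 0 :=
      hF.intervalIntegrable_of_Icc (by linarith)
    rw [intervalIntegrable_iff_integrableOn_Ico_of_le (by linarith)] at h1 ⊢
    exact h1.congr_fun hF'.symm measurableSet_Ico
  · have h1 : IntervalIntegrable G volume 0 l :=
      hG.intervalIntegrable_of_Icc hl.le
    rw [intervalIntegrable_iff_integrableOn_Ioc_of_le hl.le] at h1 ⊢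
    exact h1.congr_fun hG'.symm measurableSet_Ioc

theorem pwInt_add {m l : ℝ} {f h : ℝ → ℝ} (hm : 0 < m) (hl : 0 < l)
    (hf : PiecewiseCont m l f) (hh : PiecewiseCont m l h) :
    pwInt m l (fun x => f x + h x) = pwInt m l f + pwInt m l h := by
  unfold pwInt
  rw [intervalIntegral.integral_add (hf.int hm hl).1 (hh.int hm hl).1,
    intervalIntegral.integral_add (hf.int hm hl).2 (hh.int hm hl).2]
  ring

theorem pwInt_cmul (m l c : ℝ) (f : ℝ → ℝ) :
    pwInt m l (fun x => c * f x) = c * pwInt m l f := by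
  unfold pwInt
  rw [intervalIntegral.integral_const_mul, intervalIntegral.integral_const_mul]
  ring

theorem pwInt_mono {m l : ℝ} {f h : ℝ → ℝ} (hm : 0 < m) (hl : 0 < l)
    (hf : PiecewiseCont m l f) (hh : PiecewiseCont m l h)
    (hle : ∀ x ∈ Icc (-m) l, f x ≤ h x) :
    pwInt m l f ≤ pwInt m l h := by
  unfold pwInt
  apply add_le_add
  · exact intervalIntegral.integral_mono_on (by linarith) (hf.int hm hl).1 (hh.int hm hl).1
      fun x hx => hle x ⟨hx.1, hx.2.trans hl.le⟩
  · exact intervalIntegral.integral_mono_on hl.le (hf.int hm hl).2 (hh.int hm hl).2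
      fun x hx => hle x ⟨by linarith [hx.1], hx.2⟩

theorem pwInt_nonneg {m l : ℝ} {f : ℝ → ℝ} (hm : 0 < m) (hl : 0 < l)
    (hle : ∀ x ∈ Icc (-m) l, 0 ≤ f x) :
    0 ≤ pwInt m l f := by
  unfold pwInt
  apply add_nonneg
  · exact intervalIntegral.integral_nonneg (by linarith)
      fun x hx => hle x ⟨hx.1, hx.2.trans hl.le⟩
  · exact intervalIntegral.integral_nonneg hl.le
      fun x hx => hle x ⟨by linarith [hx.1], hx.2⟩

/-- Lower bound for the energy: `E(φ,ψ;s) ≥ -g k + (σ k²/2) ψ(0)² + s E1(φ,ψ)`,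
`E1(φ,ψ) ≥ 0`, and in particular `E(φ,ψ;s) ≥ -g k` on the normalized admissible set. -/
theorem energy_lower_bound (m l g σ k s : ℝ) (ρ0 p ε0 δ0 φ ψ φd ψd : ℝ → ℝ)
    (hm : 0 < m) (hl : 0 < l) (hg : 0 < g) (hσ : 0 ≤ σ) (hk : 0 < k) (hs : 0 < s)
    (hprof : ProfilesHyp m l ρ0 p ε0 δ0)
    (hadm : Admissible m l φ ψ φd ψd)
    (hJ : energyJ m l ρ0 φ ψ = 1) :
    0 ≤ energyE1 m l k ε0 δ0 φ ψ φd ψd ∧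
    -g * k + σ * k ^ 2 / 2 * (ψ 0) ^ 2 + s * energyE1 m l k ε0 δ0 φ ψ φd ψd
      ≤ energyE m l g σ k ρ0 p ε0 δ0 φ ψ φd ψd s ∧
    -g * k ≤ energyE m l g σ k ρ0 p ε0 δ0 φ ψ φd ψd s := by
  obtain ⟨hρ, hp, hε, hδ, ρpos, ppos, εpos, δnn⟩ := hprof
  obtain ⟨hφ, hψ, -⟩ := hadm
  have hφd : PiecewiseCont m l φd := hφ.2.2.2
  have hψd : PiecewiseCont m l ψd := hψ.2.2.2
  replace hφ := hφ.pc hm hl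
  replace hψ := hψ.pc hm hl
  replace hρ := hρ.pc
  replace hp := hp.pc
  replace hε := hε.pc
  replace hδ := hδ.pc
  have hdiv : PiecewiseCont m l (fun x => (ψd x + k * φ x) ^ 2) := (hψd.add (hφ.cmul k)).sq
  have hrest : PiecewiseCont m l (fun x => (φd x - k * ψ x) ^ 2 + (ψd x - k * φ x) ^ 2) :=
    (hφd.sub (hψ.cmul k)).sq.add (hψd.sub (hφ.cmul k)).sq
  have hA := hδ.mul hdiv
  have hB := hε.mul hdiv
  have hC := hε.mul hrest
  have hD := (hρ.mul (hp.mul hdiv)).add ((hρ.mul (hφ.mul hψ)).cmul (-2 * g * k))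
  have hN := hρ.mul (hφ.sq.add hψ.sq)
  have e1 : pwInt m l (fun x => (δ0 x + ε0 x / 3) * (ψd x + k * φ x) ^ 2)
      = pwInt m l (fun x => δ0 x * (ψd x + k * φ x) ^ 2)
        + 1 / 3 * pwInt m l (fun x => ε0 x * (ψd x + k * φ x) ^ 2) := by
    rw [← pwInt_cmul, ← pwInt_add hm hl hA (hB.cmul _)]
    congr 1; funext x; ring
  have e2 : pwInt m l (fun x =>
      (s * δ0 x + p x * ρ0 x) * (ψd x + k * φ x) ^ 2 - 2 * g * ρ0 x * k * φ x * ψ x)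
      = s * pwInt m l (fun x => δ0 x * (ψd x + k * φ x) ^ 2)
        + pwInt m l (fun x => ρ0 x * (p x * (ψd x + k * φ x) ^ 2)
          + -2 * g * k * (ρ0 x * (φ x * ψ x))) := by
    rw [← pwInt_cmul, ← pwInt_add hm hl (hA.cmul _) hD]
    congr 1; funext x; ring
  have e3 : pwInt m l (fun x => ε0 x * ((φd x - k * ψ x) ^ 2 + (ψd x - k * φ x) ^ 2
        + (1 / 3) * (ψd x + k * φ x) ^ 2))
      = pwInt m l (fun x => ε0 x * ((φd x - k * ψ x) ^ 2 + (ψd x - k * φ x) ^ 2))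
        + 1 / 3 * pwInt m l (fun x => ε0 x * (ψd x + k * φ x) ^ 2) := by
    rw [← pwInt_cmul, ← pwInt_add hm hl hC (hB.cmul _)]
    congr 1; funext x; ring
  have key : -(g * k) * pwInt m l (fun x => ρ0 x * ((φ x) ^ 2 + (ψ x) ^ 2))
      ≤ pwInt m l (fun x => ρ0 x * (p x * (ψd x + k * φ x) ^ 2)
          + -2 * g * k * (ρ0 x * (φ x * ψ x))) := by
    rw [← pwInt_cmul]
    refine pwInt_mono hm hl (hN.cmul _) hD fun x hx => ?_
    have h1 := ρpos x hx
    have h2 := ppos x hx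
    have h3 : 0 ≤ ρ0 x * (p x * (ψd x + k * φ x) ^ 2) := by positivity
    have h4 : 0 ≤ g * k * (ρ0 x * (φ x - ψ x) ^ 2) := by positivity
    linarith [h3, h4]
  have nn : 0 ≤ energyE1 m l k ε0 δ0 φ ψ φd ψd := by
    unfold energyE1
    have n1 : 0 ≤ pwInt m l (fun x => (δ0 x + ε0 x / 3) * (ψd x + k * φ x) ^ 2) :=
      pwInt_nonneg hm hl fun x hx => by
        have h1 := εpos x hx
        have h2 := δnn x hx
        positivity
    have n2 : 0 ≤ pwInt m l (fun x =>
        ε0 x * ((φd x - k * ψ x) ^ 2 + (ψd x - k * φ x) ^ 2)) :=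
      pwInt_nonneg hm hl fun x hx => by
        have h1 := εpos x hx
        positivity
    linarith
  have main : -g * k + σ * k ^ 2 / 2 * (ψ 0) ^ 2 + s * energyE1 m l k ε0 δ0 φ ψ φd ψd
      ≤ energyE m l g σ k ρ0 p ε0 δ0 φ ψ φd ψd s := by
    unfold energyJ at hJ
    have hJ' : pwInt m l (fun x => ρ0 x * ((φ x) ^ 2 + (ψ x) ^ 2)) = 2 := by linarith
    rw [hJ'] at key
    unfold energyE energyE1
    rw [e1, e2, e3]
    linarith
  refine ⟨nn, main, le_trans ?_ main⟩
  have h1 : 0 ≤ σ * k ^ 2 / 2 * (ψ 0) ^ 2 := by positivity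
  have h2 : 0 ≤ s * energyE1 m l k ε0 δ0 φ ψ φd ψd := mul_nonneg hs.le nn
  linarith

end RT
end
end

section
/- For every function ψ : ℝ → ℝ that is continuous on [-m,ℓ], continuously differentiable on [-m,0] and on [0,ℓ] (with piecewise derivative ψ'), and satisfies ψ(-m) = ψ(ℓ) = 0, one has the integration-by-parts identity ∫_{-m}^ℓ g ρ0 ψ ψ' = −(g/2)(ρ0⁺ − ρ0⁻) ψ(0)² + (g²/2) ∫_{-m}^ℓ (ρ0/p) ψ². -/
open Set MeasureTheory intervalIntegral Filter Topology

noncomputable section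

namespace RT

theorem ibp_piece (a b g : ℝ) (hab : a ≤ b) (hg : 0 < g) (ρ R p ψ ψd D : ℝ → ℝ)
    (hR : ContinuousOn R (Icc a b)) (hψ : ContinuousOn ψ (Icc a b))
    (hD : ContinuousOn D (Icc a b))
    (hρR : ∀ x ∈ Ioo a b, ρ x = R x) (hψD : ∀ x ∈ Ioo a b, ψd x = D x)
    (hρ0 : ∀ x ∈ Ioo a b, 0 < ρ x) (hp0 : ∀ x ∈ Ioo a b, 0 < p x)
    (hρ : ∀ x ∈ Ioo a b, HasDerivAt ρ (-g * ρ x / p x) x)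
    (hψ' : ∀ x ∈ Ioo a b, HasDerivAt ψ (ψd x) x) :
    (∫ x in a..b, g * ρ x * ψ x * ψd x)
      = g / 2 * (R b * ψ b ^ 2 - R a * ψ a ^ 2)
        + g ^ 2 / 2 * ∫ x in a..b, ρ x / p x * ψ x ^ 2 := by
  have hR' : ∀ x ∈ Ioo a b, HasDerivAt R (-g * ρ x / p x) x := by
    intro x hx
    refine (hρ x hx).congr_of_eventuallyEq ?_
    filter_upwards [isOpen_Ioo.mem_nhds hx] with y hy using (hρR y hy).symm
  have hi0 : IntervalIntegrable (fun x => g * ρ x / p x) volume a b := by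
    refine intervalIntegrable_deriv_of_nonneg (g := fun x => - R x) ?_ ?_ ?_
    · rw [uIcc_of_le hab]; exact hR.neg
    · rw [min_eq_left hab, max_eq_right hab]
      intro x hx
      exact (hR' x hx).fun_neg.congr_deriv (by ring)
    · rw [min_eq_left hab, max_eq_right hab]
      intro x hx
      have := hρ0 x hx
      have := hp0 x hx
      positivity
  have hi1 : IntervalIntegrable (fun x => ρ x / p x * ψ x ^ 2) volume a b := by
    have h := (hi0.mul_continuousOn (g := fun x => ψ x ^ 2)
      (by rw [uIcc_of_le hab]; exact hψ.pow 2)).const_mul g⁻¹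
    convert h using 2 with x
    field_simp
  have hi2 : IntervalIntegrable (fun x => g * ρ x * ψ x * ψd x) volume a b := by
    have h : IntervalIntegrable (fun x => g * R x * ψ x * D x) volume a b := by
      apply ContinuousOn.intervalIntegrable
      rw [uIcc_of_le hab]
      fun_prop
    refine h.congr_uIoo ?_
    rw [uIoo_of_le hab]
    intro x hx
    simp only [hρR x hx, hψD x hx]
  have key := integral_eq_sub_of_hasDerivAt_of_le hab (f := fun x => g / 2 * (R x * ψ x ^ 2))
    (f' := fun x => g * ρ x * ψ x * ψd x - g ^ 2 / 2 * (ρ x / p x * ψ x ^ 2))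
    (by fun_prop)
    (by
      intro x hx
      refine (((hR' x hx).fun_mul ((hψ' x hx).fun_pow 2)).const_mul (g / 2)).congr_deriv ?_
      rw [← hρR x hx]
      push_cast
      ring)
    (hi2.sub (hi1.const_mul _))
  rw [intervalIntegral.integral_sub hi2 (hi1.const_mul _),
    intervalIntegral.integral_const_mul] at key
  linarith

/-- The integration-by-parts identity
`∫ g ρ0 ψ ψ' = -(g/2)(ρ0⁺ - ρ0⁻) ψ(0)² + (g²/2) ∫ (ρ0/p) ψ²` under the hydrostatic
steady-state relation, where `ρ0⁺ = ρ0 0` and `ρ0⁻` is the left limit of `ρ0` at `0`. -/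
theorem steady_state_integration_by_parts (m l g σ k : ℝ) (ρ0 p ε0 δ0 ψ ψd : ℝ → ℝ)
    (ρ0minus : ℝ)
    (hm : 0 < m) (hl : 0 < l) (hg : 0 < g) (hσ : 0 ≤ σ) (hk : 0 < k)
    (hprof : ProfilesHyp m l ρ0 p ε0 δ0)
    (hhydro : Hydrostatic m l g ρ0 p)
    (hρm : Tendsto ρ0 (𝓝[<] 0) (𝓝 ρ0minus))
    (hψ : PiecewiseC1 m l ψ ψd) (hbc1 : ψ (-m) = 0) (hbc2 : ψ l = 0) :
    pwInt m l (fun x => g * ρ0 x * ψ x * ψd x)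
      = -(g / 2) * (ρ0 0 - ρ0minus) * (ψ 0) ^ 2
        + g ^ 2 / 2 * pwInt m l (fun x => ρ0 x / p x * (ψ x) ^ 2) := by
  obtain ⟨⟨⟨R, hR, hρR⟩, hρr⟩, -, -, -, hρ0, hp0, -, -⟩ := hprof
  obtain ⟨h1, h2⟩ := hhydro
  obtain ⟨hc, hd1, hd2, ⟨D, hD, hDe⟩, ⟨D', hD', hDe'⟩⟩ := hψ
  have hR0 : R 0 = ρ0minus := by
    have hle : 𝓝[<] (0:ℝ) = 𝓝[Ico (-m) 0] 0 :=
      (nhdsWithin_Ico_eq_nhdsLT (by linarith)).symm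
    have t1 : Tendsto R (𝓝[<] 0) (𝓝 (R 0)) := by
      rw [hle]
      exact (hR 0 ⟨by linarith, le_rfl⟩).mono_left (nhdsWithin_mono _ Ico_subset_Icc_self)
    refine tendsto_nhds_unique (t1.congr' ?_) hρm
    rw [hle]
    filter_upwards [self_mem_nhdsWithin] with x hx using (hρR hx).symm
  have e1 := ibp_piece (-m) 0 g (by linarith) hg ρ0 R p ψ ψd D hR
    (hc.mono (Icc_subset_Icc_right hl.le)) hD
    (fun x hx => hρR (Ioo_subset_Ico_self hx)) (fun x hx => hDe (Ioo_subset_Ico_self hx))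
    (fun x hx => hρ0 x ⟨hx.1.le, hx.2.le.trans hl.le⟩)
    (fun x hx => hp0 x ⟨hx.1.le, hx.2.le.trans hl.le⟩)
    (fun x hx => (h1 x (Ioo_subset_Ico_self hx)).hasDerivAt (Ico_mem_nhds hx.1 hx.2))
    (fun x hx => (hd1 x (Ioo_subset_Ico_self hx)).hasDerivAt (Icc_mem_nhds hx.1 hx.2))
  have hm' : -m ≤ 0 := by linarith
  have e2 := ibp_piece 0 l g hl.le hg ρ0 ρ0 p ψ ψd D' hρr
    (hc.mono (Icc_subset_Icc_left hm')) hD'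
    (fun x hx => rfl) (fun x hx => hDe' (Ioo_subset_Ioc_self hx))
    (fun x hx => hρ0 x ⟨hm'.trans hx.1.le, hx.2.le⟩)
    (fun x hx => hp0 x ⟨hm'.trans hx.1.le, hx.2.le⟩)
    (fun x hx => (h2 x (Ioo_subset_Ioc_self hx)).hasDerivAt (Ioc_mem_nhds hx.1 hx.2))
    (fun x hx => (hd2 x (Ioo_subset_Ioc_self hx)).hasDerivAt (Icc_mem_nhds hx.1 hx.2))
  unfold pwInt
  rw [e1, e2, hR0, hbc1, hbc2]
  ring

end RT
end
end

section
/- If an admissible pair (φ,ψ) and some s > 0 satisfy E(φ,ψ;s) < 0, then ψ(0) ≠ 0 and σ k² < g(ρ0⁺ − ρ0⁻). -/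
open Set MeasureTheory intervalIntegral Filter Topology

noncomputable section

namespace RT

lemma piece_bound (a b g k s : ℝ) (hab : a < b) (hs : 0 < s)
    (ρ0 p δ0 φ ψ ψd R P D Ψd : ℝ → ℝ)
    (hR : ContinuousOn R (Icc a b)) (hP : ContinuousOn P (Icc a b))
    (hD : ContinuousOn D (Icc a b)) (hΨd : ContinuousOn Ψd (Icc a b))
    (hφ : ContinuousOn φ (Icc a b)) (hψ : ContinuousOn ψ (Icc a b))
    (eR : EqOn ρ0 R (Ioo a b)) (eP : EqOn p P (Ioo a b))
    (eD : EqOn δ0 D (Ioo a b)) (eψ : EqOn ψd Ψd (Ioo a b))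
    (pρ : ∀ x ∈ Ioo a b, 0 < ρ0 x) (pp : ∀ x ∈ Ioo a b, 0 < p x)
    (pδ : ∀ x ∈ Ioo a b, 0 ≤ δ0 x)
    (dρ : ∀ x ∈ Ioo a b, HasDerivAt ρ0 (-g * ρ0 x / p x) x)
    (dψ : ∀ x ∈ Ioo a b, HasDerivAt ψ (ψd x) x) :
    g * R b * ψ b ^ 2 - g * R a * ψ a ^ 2 ≤ ∫ x in a..b,
      ((s * δ0 x + p x * ρ0 x) * (ψd x + k * φ x) ^ 2 - 2 * g * ρ0 x * k * φ x * ψ x) := by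
  have hc : ContinuousOn (fun x => (s * D x + P x * R x) * (Ψd x + k * φ x) ^ 2
      - 2 * g * R x * k * φ x * ψ x) (Icc a b) := by fun_prop
  have hi : IntegrableOn (fun x => (s * δ0 x + p x * ρ0 x) * (ψd x + k * φ x) ^ 2
      - 2 * g * ρ0 x * k * φ x * ψ x) (Icc a b) := by
    rw [integrableOn_Icc_iff_integrableOn_Ioo]
    refine IntegrableOn.congr_fun (hc.integrableOn_Icc.mono_set Ioo_subset_Icc_self) ?_
      measurableSet_Ioo
    intro x hx
    simp only [eR hx, eP hx, eD hx, eψ hx]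
  refine sub_le_integral_of_hasDeriv_right_of_le (g := fun x => g * R x * ψ x ^ 2)
    (g' := fun x => g * (-g * ρ0 x / p x) * ψ x ^ 2 + g * ρ0 x * (2 * ψ x * ψd x))
    hab.le (by fun_prop) ?_ hi ?_
  · intro x hx
    have h1 : HasDerivAt R (-g * ρ0 x / p x) x :=
      (dρ x hx).congr_of_eventuallyEq
        ((eR.eventuallyEq_of_mem (isOpen_Ioo.mem_nhds hx)).symm)
    have h2 := (h1.const_mul g).mul ((dψ x hx).pow 2)
    refine (h2.congr_deriv ?_).hasDerivWithinAt
    simp [eR hx]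
  · intro x hx
    have h1 := pρ x hx
    have h2 := pp x hx
    have h3 := pδ x hx
    have e : (s * δ0 x + p x * ρ0 x) * (ψd x + k * φ x) ^ 2 - 2 * g * ρ0 x * k * φ x * ψ x
      = (g * (-g * ρ0 x / p x) * ψ x ^ 2 + g * ρ0 x * (2 * ψ x * ψd x))
        + (s * δ0 x * (ψd x + k * φ x) ^ 2
          + p x * ρ0 x * (ψd x + k * φ x - g * ψ x / p x) ^ 2) := by
      field_simp
      ring
    have : 0 ≤ s * δ0 x * (ψd x + k * φ x) ^ 2
          + p x * ρ0 x * (ψd x + k * φ x - g * ψ x / p x) ^ 2 := by positivity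
    show _ ≤ (s * δ0 x + p x * ρ0 x) * (ψd x + k * φ x) ^ 2 - 2 * g * ρ0 x * k * φ x * ψ x
    rw [e]
    linarith

/-- If the energy of an admissible pair is negative then `ψ(0) ≠ 0` and
`σ k² < g (ρ0⁺ - ρ0⁻)`, where `ρ0⁺ = ρ0 0` and `ρ0⁻` is the left limit of `ρ0` at `0`. -/
theorem negative_energy_interface_displacement (m l g σ k s : ℝ)
    (ρ0 p ε0 δ0 φ ψ φd ψd : ℝ → ℝ) (ρ0minus : ℝ)
    (hm : 0 < m) (hl : 0 < l) (hg : 0 < g) (hσ : 0 ≤ σ) (hk : 0 < k) (hs : 0 < s)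
    (hprof : ProfilesHyp m l ρ0 p ε0 δ0)
    (hhydro : Hydrostatic m l g ρ0 p)
    (hρm : Tendsto ρ0 (𝓝[<] 0) (𝓝 ρ0minus))
    (hadm : Admissible m l φ ψ φd ψd)
    (hE : energyE m l g σ k ρ0 p ε0 δ0 φ ψ φd ψd s < 0) :
    ψ 0 ≠ 0 ∧ σ * k ^ 2 < g * (ρ0 0 - ρ0minus) := by
  obtain ⟨⟨⟨R, hR, eR⟩, hR'⟩, ⟨⟨P, hP, eP⟩, hP'⟩, -, ⟨⟨D, hD, eD⟩, hD'⟩, pρ, pp, pε, pδ⟩ := hprof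
  obtain ⟨⟨hφ, -⟩, ⟨hψ, dψ1, dψ2, ⟨Q, hQ, eQ⟩, ⟨Q', hQ', eQ'⟩⟩, -, -, ψm, ψl⟩ := hadm
  have s1 : Icc (-m) 0 ⊆ Icc (-m) l := Icc_subset_Icc_right hl.le
  have s2 : Icc 0 l ⊆ Icc (-m) l := Icc_subset_Icc_left (by linarith)
  have t1 : Ioo (-m) 0 ⊆ Icc (-m) l := Ioo_subset_Icc_self.trans s1
  have t2 : Ioo 0 l ⊆ Icc (-m) l := Ioo_subset_Icc_self.trans s2
  have hm0 : -m < 0 := by linarith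
  have b1 := piece_bound (-m) 0 g k s hm0 hs ρ0 p δ0 φ ψ ψd R P D Q hR hP hD hQ
    (hφ.mono s1) (hψ.mono s1) (eR.mono Ioo_subset_Ico_self) (eP.mono Ioo_subset_Ico_self)
    (eD.mono Ioo_subset_Ico_self) (eQ.mono Ioo_subset_Ico_self)
    (fun x hx => pρ x (t1 hx)) (fun x hx => pp x (t1 hx)) (fun x hx => pδ x (t1 hx))
    (fun x hx => (hhydro.1 x (Ioo_subset_Ico_self hx)).hasDerivAt (Ico_mem_nhds hx.1 hx.2))
    (fun x hx => (dψ1 x (Ioo_subset_Ico_self hx)).hasDerivAt (Icc_mem_nhds hx.1 hx.2))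
  have b2 := piece_bound 0 l g k s hl hs ρ0 p δ0 φ ψ ψd ρ0 p δ0 Q' hR' hP' hD' hQ'
    (hφ.mono s2) (hψ.mono s2) (fun _ _ => rfl) (fun _ _ => rfl)
    (fun _ _ => rfl) (eQ'.mono Ioo_subset_Ioc_self)
    (fun x hx => pρ x (t2 hx)) (fun x hx => pp x (t2 hx)) (fun x hx => pδ x (t2 hx))
    (fun x hx => (hhydro.2 x (Ioo_subset_Ioc_self hx)).hasDerivAt (Ioc_mem_nhds hx.1 hx.2))
    (fun x hx => (dψ2 x (Ioo_subset_Ioc_self hx)).hasDerivAt (Icc_mem_nhds hx.1 hx.2))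
  have hR0 : R 0 = ρ0minus := by
    have h1 : Tendsto R (𝓝[<] 0) (𝓝 (R 0)) := by
      have := (hR 0 ⟨hm0.le, le_rfl⟩).mono_left
        (nhdsWithin_mono 0 (Ioo_subset_Icc_self (a := -m) (b := (0:ℝ))))
      rwa [nhdsWithin_Ioo_eq_nhdsLT hm0] at this
    refine tendsto_nhds_unique (h1.congr' ?_) hρm
    filter_upwards [Ioo_mem_nhdsLT hm0] with x hx
    exact (eR (Ioo_subset_Ico_self hx)).symm
  have n0 : 0 ≤ pwInt m l (fun x => ε0 x * ((φd x - k * ψ x) ^ 2 + (ψd x - k * φ x) ^ 2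
        + (1 / 3) * (ψd x + k * φ x) ^ 2)) := by
    refine add_nonneg (integral_nonneg hm0.le ?_) (integral_nonneg hl.le ?_)
    · intro x hx
      have := pε x (s1 hx)
      positivity
    · intro x hx
      have := pε x (s2 hx)
      positivity
  have n1 := mul_nonneg (half_pos hs).le n0
  rw [ψm, hR0] at b1
  rw [ψl] at b2
  unfold energyE at hE
  have key : (σ * k ^ 2 - g * (ρ0 0 - ρ0minus)) * ψ 0 ^ 2 < 0 := by
    have b3 := add_le_add b1 b2
    change _ ≤ pwInt m l (fun x => (s * δ0 x + p x * ρ0 x) * (ψd x + k * φ x) ^ 2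
      - 2 * g * ρ0 x * k * φ x * ψ x) at b3
    linarith
  constructor
  · intro h
    simp [h] at key
  · by_contra h
    have : 0 ≤ (σ * k ^ 2 - g * (ρ0 0 - ρ0minus)) * ψ 0 ^ 2 :=
      mul_nonneg (by linarith) (sq_nonneg _)
    linarith

end RT
end
end

section
/- For every function ψ : ℝ → ℝ that is continuous on [-m,ℓ], continuously differentiable on [-m,0] and on [0,ℓ] (with piecewise derivative ψ'), and satisfies ψ(-m) = ψ(ℓ) = 0, one has the identity (g(ρ0⁺ − ρ0⁻)/2) ψ(0)² − (1/2)∫_{-m}^ℓ p ρ0 (ψ' − (g/p) ψ)² = −(1/2)∫_{-m}^ℓ p ρ0 (ψ')². In particular the left-hand side is ≤ 0. -/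
open Set MeasureTheory intervalIntegral Filter Topology

noncomputable section

namespace RT

/-- The identity on one interval. -/
lemma piece_identity (a b g : ℝ) (hab : a < b) (hg : 0 < g) (R P D ψ r p d : ℝ → ℝ)
    (hR : ContinuousOn R (Icc a b)) (hP : ContinuousOn P (Icc a b))
    (hD : ContinuousOn D (Icc a b)) (hψ : ContinuousOn ψ (Icc a b))
    (hr : EqOn r R (Ioo a b)) (hp : EqOn p P (Ioo a b)) (hd : EqOn d D (Ioo a b))
    (hrpos : ∀ x ∈ Ioo a b, 0 < r x) (hppos : ∀ x ∈ Ioo a b, 0 < p x)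
    (hrd : ∀ x ∈ Ioo a b, HasDerivAt r (-g * r x / p x) x)
    (hψd : ∀ x ∈ Ioo a b, HasDerivAt ψ (d x) x) :
    (∫ x in a..b, p x * r x * (d x - g / p x * ψ x) ^ 2)
      = (∫ x in a..b, p x * r x * (d x) ^ 2)
        - g * (R b * ψ b ^ 2 - R a * ψ a ^ 2) ∧
    0 ≤ ∫ x in a..b, p x * r x * (d x) ^ 2 := by
  have hRd : ∀ x ∈ Ioo a b, HasDerivAt R (-g * R x / P x) x := by
    intro x hx
    have h := hrd x hx
    rw [hr hx, hp hx] at h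
    exact h.congr_of_eventuallyEq
      (Filter.eventuallyEq_of_mem (isOpen_Ioo.mem_nhds hx) (fun y hy => (hr hy).symm))
  have hψD : ∀ x ∈ Ioo a b, HasDerivAt ψ (D x) x := fun x hx => hd hx ▸ hψd x hx
  have hRpos : ∀ x ∈ Ioo a b, 0 < R x := fun x hx => hr hx ▸ hrpos x hx
  have hPpos : ∀ x ∈ Ioo a b, 0 < P x := fun x hx => hp hx ▸ hppos x hx
  have congrI : ∀ u v : ℝ → ℝ, EqOn u v (Ioo a b) →
      (∫ x in a..b, u x) = ∫ x in a..b, v x := by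
    intro u v h
    rw [integral_of_le hab.le, integral_of_le hab.le, integral_Ioc_eq_integral_Ioo,
      integral_Ioc_eq_integral_Ioo]
    exact setIntegral_congr_fun measurableSet_Ioo h
  have huIcc : uIcc a b = Icc a b := uIcc_of_le hab.le
  -- integrability of the density derivative
  have hint0 : IntervalIntegrable (fun x => g * R x / P x) volume a b := by
    rw [intervalIntegrable_iff_integrableOn_Ioc_of_le hab.le]
    refine integrableOn_deriv_of_nonneg (g := fun x => - R x) hR.neg (fun x hx => ?_)
      (fun x hx => ?_)
    · exact HasDerivAt.congr_deriv (hRd x hx).neg (by ring)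
    · have := hRpos x hx
      have := hPpos x hx
      positivity
  have hint1 : IntervalIntegrable (fun x => g * R x / P x * (g * ψ x ^ 2)) volume a b :=
    hint0.mul_continuousOn (by rw [huIcc]; fun_prop)
  have hint2 : IntervalIntegrable (fun x => 2 * g * R x * ψ x * D x) volume a b :=
    ContinuousOn.intervalIntegrable (by rw [huIcc]; fun_prop)
  have hint3 : IntervalIntegrable (fun x => P x * R x * D x ^ 2) volume a b :=
    ContinuousOn.intervalIntegrable (by rw [huIcc]; fun_prop)
  have hFTC : (∫ x in a..b, (2 * g * R x * ψ x * D x - g * R x / P x * (g * ψ x ^ 2)))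
      = g * R b * ψ b ^ 2 - g * R a * ψ a ^ 2 := by
    refine integral_eq_sub_of_hasDerivAt_of_le (f := fun x => g * R x * ψ x ^ 2) hab.le
      (by fun_prop) (fun x hx => ?_) (hint2.sub hint1)
    refine HasDerivAt.congr_deriv (((hRd x hx).const_mul g).mul ((hψD x hx).pow 2)) ?_
    simp only [Nat.cast_ofNat]
    ring
  constructor
  · rw [congrI _ (fun x => P x * R x * D x ^ 2 -
        (2 * g * R x * ψ x * D x - g * R x / P x * (g * ψ x ^ 2))),
      congrI (fun x => p x * r x * (d x) ^ 2) (fun x => P x * R x * D x ^ 2),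
      integral_sub hint3 (hint2.sub hint1), hFTC]
    · ring
    · intro x hx
      simp only [hr hx, hp hx, hd hx]
    · intro x hx
      simp only [hr hx, hp hx, hd hx]
      have := (hPpos x hx).ne'
      field_simp
      ring
  · rw [congrI (fun x => p x * r x * (d x) ^ 2) (fun x => |p x * r x * (d x) ^ 2|)]
    · exact integral_nonneg hab.le (fun x _ => abs_nonneg _)
    · intro x hx
      have := hrpos x hx
      have := hppos x hx
      exact (abs_of_nonneg (by positivity)).symm

/-- The zero-frequency identity underlying the small-period stability estimate:
`(g(ρ0⁺ - ρ0⁻)/2) ψ(0)² - (1/2)∫ p ρ0 (ψ' - (g/p)ψ)² = -(1/2)∫ p ρ0 (ψ')²`, so in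
particular the left-hand side is nonpositive.  Here `ρ0⁺ = ρ0 0` and `ρ0⁻` is the left
limit of `ρ0` at `0`. -/
theorem zero_frequency_stability_identity (m l g : ℝ) (ρ0 p ψ ψd : ℝ → ℝ)
    (ρ0minus : ℝ)
    (hm : 0 < m) (hl : 0 < l) (hg : 0 < g)
    (hρ0 : Profile m l ρ0) (hp : Profile m l p)
    (hρ0pos : ∀ x ∈ Icc (-m) l, 0 < ρ0 x) (hppos : ∀ x ∈ Icc (-m) l, 0 < p x)
    (hhydro : Hydrostatic m l g ρ0 p)
    (hρm : Tendsto ρ0 (𝓝[<] 0) (𝓝 ρ0minus))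
    (hψ : PiecewiseC1 m l ψ ψd) (hbc1 : ψ (-m) = 0) (hbc2 : ψ l = 0) :
    g * (ρ0 0 - ρ0minus) / 2 * (ψ 0) ^ 2
        - (1 / 2) * pwInt m l (fun x => p x * ρ0 x * (ψd x - g / p x * ψ x) ^ 2)
      = -(1 / 2) * pwInt m l (fun x => p x * ρ0 x * (ψd x) ^ 2) ∧
    g * (ρ0 0 - ρ0minus) / 2 * (ψ 0) ^ 2
        - (1 / 2) * pwInt m l (fun x => p x * ρ0 x * (ψd x - g / p x * ψ x) ^ 2) ≤ 0 := by
  obtain ⟨⟨R, hRc, hR⟩, hρc⟩ := hρ0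
  obtain ⟨⟨P, hPc, hP⟩, hpc⟩ := hp
  obtain ⟨hψc, hψ1, hψ2, ⟨D, hDc, hD⟩, ⟨D2, hDc2, hD2⟩⟩ := hψ
  obtain ⟨hh1, hh2⟩ := hhydro
  have hm0 : -m < 0 := by linarith
  have hR0 : R 0 = ρ0minus := by
    have h1 : Tendsto R (𝓝[Ioo (-m) 0] 0) (𝓝 (R 0)) :=
      (hRc 0 ⟨hm0.le, le_rfl⟩).mono_left (nhdsWithin_mono _ Ioo_subset_Icc_self)
    rw [nhdsWithin_Ioo_eq_nhdsLT hm0] at h1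
    have h2 : ρ0 =ᶠ[𝓝[<] 0] R :=
      Filter.eventuallyEq_of_mem (Ioo_mem_nhdsLT hm0) (fun x hx => hR ⟨hx.1.le, hx.2⟩)
    exact tendsto_nhds_unique h1 (hρm.congr' h2)
  obtain ⟨e1, n1⟩ := piece_identity (-m) 0 g hm0 hg R P D ψ ρ0 p ψd hRc hPc hDc
    (hψc.mono (Icc_subset_Icc le_rfl hl.le))
    (hR.mono Ioo_subset_Ico_self) (hP.mono Ioo_subset_Ico_self) (hD.mono Ioo_subset_Ico_self)
    (fun x hx => hρ0pos x ⟨hx.1.le, hx.2.le.trans hl.le⟩)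
    (fun x hx => hppos x ⟨hx.1.le, hx.2.le.trans hl.le⟩)
    (fun x hx => (hh1 x ⟨hx.1.le, hx.2⟩).hasDerivAt (Ico_mem_nhds hx.1 hx.2))
    (fun x hx => (hψ1 x ⟨hx.1.le, hx.2⟩).hasDerivAt (Icc_mem_nhds hx.1 hx.2))
  obtain ⟨e2, n2⟩ := piece_identity 0 l g hl hg ρ0 p D2 ψ ρ0 p ψd hρc hpc hDc2
    (hψc.mono (Icc_subset_Icc hm0.le le_rfl))
    (fun _ _ => rfl) (fun _ _ => rfl) (hD2.mono Ioo_subset_Ioc_self)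
    (fun x hx => hρ0pos x ⟨hm0.le.trans hx.1.le, hx.2.le⟩)
    (fun x hx => hppos x ⟨hm0.le.trans hx.1.le, hx.2.le⟩)
    (fun x hx => (hh2 x ⟨hx.1, hx.2.le⟩).hasDerivAt (Ioc_mem_nhds hx.1 hx.2))
    (fun x hx => (hψ2 x ⟨hx.1, hx.2.le⟩).hasDerivAt (Icc_mem_nhds hx.1 hx.2))
  rw [hbc1, hR0] at e1
  rw [hbc2] at e2
  have key : g * (ρ0 0 - ρ0minus) / 2 * (ψ 0) ^ 2
        - (1 / 2) * pwInt m l (fun x => p x * ρ0 x * (ψd x - g / p x * ψ x) ^ 2)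
      = -(1 / 2) * pwInt m l (fun x => p x * ρ0 x * (ψd x) ^ 2) := by
    unfold pwInt
    rw [e1, e2]
    ring
  refine ⟨key, ?_⟩
  rw [key]
  unfold pwInt
  linarith

end RT
end
end

section
/- Let s > 0, k ≥ 0, and suppose θ : ℝ → ℝ is continuous on [-m,ℓ], twice continuously differentiable on [-m,0] and on [0,ℓ] (one-sided derivatives at -m, 0, ℓ), with θ(-m) = θ(ℓ) = 0, with matching flux at the interface s ε0⁻ θ'(0⁻) = s ε0⁺ θ'(0⁺), and satisfying the ODE −(s ε0 θ')'(x) + (s² ρ0(x) + s ε0(x) k²) θ(x) = 0 for all x ∈ [-m,0) ∪ (0,ℓ]. Then θ(x) = 0 for all x ∈ [-m,ℓ]. -/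
open Set Filter Topology

noncomputable section

namespace RT14

/-- `f` restricted to `[-m,0)` extends continuously to `[-m,0]`, and `f` restricted to
`(0,ℓ]` extends continuously to `[0,ℓ]`. -/
def PiecewiseCont (m l : ℝ) (f : ℝ → ℝ) : Prop :=
  (∃ F : ℝ → ℝ, ContinuousOn F (Icc (-m) 0) ∧ EqOn f F (Ico (-m) 0)) ∧
  (∃ F : ℝ → ℝ, ContinuousOn F (Icc 0 l) ∧ EqOn f F (Ioc 0 l))

lemma mono_of_deriv (S : Set ℝ) (hS : Convex ℝ S) (f D : ℝ → ℝ)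
    (h : ∀ x ∈ S, HasDerivWithinAt f (D x) S x) (hD : ∀ x ∈ S, 0 ≤ D x) : MonotoneOn f S := by
  apply monotoneOn_of_deriv_nonneg hS (fun x hx => (h x hx).continuousWithinAt)
  · intro x hx
    exact (((h x (interior_subset hx)).hasDerivAt
      (mem_interior_iff_mem_nhds.1 hx)).differentiableAt).differentiableWithinAt
  · intro x hx
    rw [((h x (interior_subset hx)).hasDerivAt (mem_interior_iff_mem_nhds.1 hx)).deriv]
    exact hD x (interior_subset hx)

lemma deriv_zero_of_const (S : Set ℝ) (f D : ℝ → ℝ)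
    (h : ∀ x ∈ S, HasDerivWithinAt f (D x) S x) (hf : ∀ x ∈ S, f x = 0) :
    ∀ x ∈ interior S, D x = 0 := by
  intro x hx
  have h1 := (h x (interior_subset hx)).hasDerivAt (mem_interior_iff_mem_nhds.1 hx)
  have h2 : HasDerivAt f 0 x := by
    apply (hasDerivAt_const x (0 : ℝ)).congr_of_eventuallyEq
    filter_upwards [mem_interior_iff_mem_nhds.1 hx] with y hy using hf y hy
  exact h1.unique h2

/-- A continuous, piecewise twice continuously differentiable solution `θ` of the
two-point boundary value problem `-(s ε0 θ')' + (s² ρ0 + s ε0 k²) θ = 0` on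
`[-m,0) ∪ (0,ℓ]`, with `θ(-m) = θ(ℓ) = 0` and matching viscous flux
`s ε0⁻ θ'(0⁻) = s ε0⁺ θ'(0⁺)` at the interface, vanishes identically on `[-m,ℓ]`.
Here `θd, θdd` are the piecewise first and second derivatives of `θ`, `εd` the piecewise
derivative of `ε0`, `ε0⁻ = ε0minus` and `θ'(0⁻) = θdL`, `θ'(0⁺) = θdR` are the one-sided
limits at `0`, and `ε0⁺ = ε0 0` by right-continuity. -/
theorem theta_vanishes (m l s k : ℝ) (ρ0 ε0 εd θ θd θdd : ℝ → ℝ)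
    (ε0minus θdL θdR : ℝ)
    (hm : 0 < m) (hl : 0 < l) (hs : 0 < s) (hk : 0 ≤ k)
    -- the density profile ρ0 : piecewise continuous extensions, right-continuous at 0
    (hρ0ext : (∃ F : ℝ → ℝ, ContinuousOn F (Icc (-m) 0) ∧ EqOn ρ0 F (Ico (-m) 0)))
    (hρ0cont : ContinuousOn ρ0 (Icc 0 l))
    (hρ0pos : ∀ x ∈ Icc (-m) l, 0 < ρ0 x)
    -- the viscosity profile ε0 : piecewise C¹ with derivative εd, right-continuous at 0
    (hε0pos : ∀ x ∈ Icc (-m) l, 0 < ε0 x)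
    (hε0cont : ContinuousOn ε0 (Icc 0 l))
    (hε0d₁ : ∀ x ∈ Ico (-m) 0, HasDerivWithinAt ε0 (εd x) (Ico (-m) 0) x)
    (hε0d₂ : ∀ x ∈ Ioc 0 l, HasDerivWithinAt ε0 (εd x) (Ioc 0 l) x)
    (hε0ext : PiecewiseCont m l ε0) (hεdext : PiecewiseCont m l εd)
    (hε0minus : Tendsto ε0 (𝓝[<] 0) (𝓝 ε0minus))
    -- θ : continuous on [-m,ℓ], piecewise C², with boundary conditions
    (hθc : ContinuousOn θ (Icc (-m) l))
    (hθbc1 : θ (-m) = 0) (hθbc2 : θ l = 0)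
    (hθd₁ : ∀ x ∈ Ico (-m) 0, HasDerivWithinAt θ (θd x) (Icc (-m) 0) x)
    (hθd₂ : ∀ x ∈ Ioc 0 l, HasDerivWithinAt θ (θd x) (Icc 0 l) x)
    (hθdd₁ : ∀ x ∈ Ico (-m) 0, HasDerivWithinAt θd (θdd x) (Ico (-m) 0) x)
    (hθdd₂ : ∀ x ∈ Ioc 0 l, HasDerivWithinAt θd (θdd x) (Ioc 0 l) x)
    (hθdext : PiecewiseCont m l θd) (hθddext : PiecewiseCont m l θdd)
    (hθdL : Tendsto θd (𝓝[<] 0) (𝓝 θdL))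
    (hθdR : Tendsto θd (𝓝[>] 0) (𝓝 θdR))
    -- matching flux at the interface : s ε0⁻ θ'(0⁻) = s ε0⁺ θ'(0⁺)
    (hflux : s * ε0minus * θdL = s * ε0 0 * θdR)
    -- the ODE : -(s ε0 θ')' + (s² ρ0 + s ε0 k²) θ = 0 on [-m,0) ∪ (0,ℓ]
    (hODE : ∀ x ∈ Ico (-m) 0 ∪ Ioc 0 l,
      -(s * εd x * θd x + s * ε0 x * θdd x)
        + (s ^ 2 * ρ0 x + s * ε0 x * k ^ 2) * θ x = 0) :
    ∀ x ∈ Icc (-m) l, θ x = 0 := by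
  set E : ℝ → ℝ := fun x => s * ε0 x * θd x * θ x with hE
  set D : ℝ → ℝ := fun x => s * ε0 x * θd x ^ 2 + (s ^ 2 * ρ0 x + s * ε0 x * k ^ 2) * θ x ^ 2
    with hDdef
  have hDer : ∀ S : Set ℝ, ∀ x ∈ Ico (-m) 0 ∪ Ioc 0 l, HasDerivWithinAt ε0 (εd x) S x →
      HasDerivWithinAt θ (θd x) S x → HasDerivWithinAt θd (θdd x) S x →
      HasDerivWithinAt E (D x) S x := by
    intro S x hx h1 h2 h3
    have h := ((h1.const_mul s).mul h3).mul h2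
    refine h.congr_deriv ?_
    have := hODE x hx
    simp only [hDdef, Pi.mul_apply]
    linear_combination (-θ x) * this
  have hL : ∀ x ∈ Ico (-m) 0, HasDerivWithinAt E (D x) (Ico (-m) 0) x := fun x hx =>
    hDer _ x (Or.inl hx) (hε0d₁ x hx) ((hθd₁ x hx).mono Ico_subset_Icc_self) (hθdd₁ x hx)
  have hR : ∀ x ∈ Ioc 0 l, HasDerivWithinAt E (D x) (Ioc 0 l) x := fun x hx =>
    hDer _ x (Or.inr hx) (hε0d₂ x hx) ((hθd₂ x hx).mono Ioc_subset_Icc_self) (hθdd₂ x hx)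
  have hIL : ∀ x ∈ Ico (-m) 0, x ∈ Icc (-m) l := fun x hx => ⟨hx.1, by linarith [hx.2]⟩
  have hIR : ∀ x ∈ Ioc 0 l, x ∈ Icc (-m) l := fun x hx => ⟨by linarith [hx.1], hx.2⟩
  have hD0 : ∀ x ∈ Icc (-m) l, 0 ≤ D x := by
    intro x hx
    have := hρ0pos x hx
    have := hε0pos x hx
    simp only [hDdef]
    positivity
  have hDz : ∀ x ∈ Icc (-m) l, D x = 0 → θ x = 0 := by
    intro x hx h0
    have h1 := hρ0pos x hx
    have h2 := hε0pos x hx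
    simp only [hDdef] at h0
    by_contra hne
    have h3 : 0 ≤ s * ε0 x * θd x ^ 2 := by positivity
    have h4 : 0 < (s ^ 2 * ρ0 x + s * ε0 x * k ^ 2) * θ x ^ 2 := by positivity
    linarith
  have mL := mono_of_deriv _ (convex_Ico (-m) 0) E D hL (fun x hx => hD0 x (hIL x hx))
  have mR := mono_of_deriv _ (convex_Ioc 0 l) E D hR (fun x hx => hD0 x (hIR x hx))
  have h0mem : (0 : ℝ) ∈ Icc (-m) l := ⟨by linarith, hl.le⟩
  have hθ0 : Tendsto θ (𝓝 0) (𝓝 (θ 0)) :=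
    (hθc.continuousAt (Icc_mem_nhds (by linarith) hl))
  have hεR : Tendsto ε0 (𝓝[>] 0) (𝓝 (ε0 0)) :=
    ((hε0cont 0 ⟨le_rfl, hl.le⟩).mono_of_mem_nhdsWithin (Icc_mem_nhdsGT hl))
  have tL : Tendsto E (𝓝[<] 0) (𝓝 (s * ε0minus * θdL * θ 0)) :=
    ((hε0minus.const_mul s).mul hθdL).mul (hθ0.mono_left nhdsWithin_le_nhds)
  have tR : Tendsto E (𝓝[>] 0) (𝓝 (s * ε0minus * θdL * θ 0)) := by
    rw [hflux]
    exact ((hεR.const_mul s).mul hθdR).mul (hθ0.mono_left nhdsWithin_le_nhds)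
  have eL : E (-m) = 0 := by simp [hE, hθbc1]
  have eR : E l = 0 := by simp [hE, hθbc2]
  have bL : ∀ x ∈ Ico (-m) 0, E x ≤ s * ε0minus * θdL * θ 0 := by
    intro x hx
    refine ge_of_tendsto tL ?_
    filter_upwards [Ico_mem_nhdsLT hx.2] with y hy
    exact mL hx ⟨hx.1.trans hy.1, hy.2⟩ hy.1
  have bR : ∀ x ∈ Ioc 0 l, s * ε0minus * θdL * θ 0 ≤ E x := by
    intro x hx
    refine le_of_tendsto tR ?_
    filter_upwards [Ioc_mem_nhdsGT hx.1] with y hy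
    exact mR ⟨hy.1, hy.2.trans hx.2⟩ hx hy.2
  have mm : -m ∈ Ico (-m) 0 := ⟨le_rfl, by linarith⟩
  have ml : l ∈ Ioc 0 l := ⟨hl, le_rfl⟩
  have l1 := bL _ mm
  have l2 := bR _ ml
  have zL : ∀ x ∈ Ico (-m) 0, E x = 0 := fun x hx => by
    have h1 := bL x hx
    have h2 := mL mm hx hx.1
    linarith
  have zR : ∀ x ∈ Ioc 0 l, E x = 0 := fun x hx => by
    have h1 := bR x hx
    have h2 := mR hx ml hx.2
    linarith
  have dL := deriv_zero_of_const _ E D hL zL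
  have dR := deriv_zero_of_const _ E D hR zR
  rw [interior_Ico] at dL
  rw [interior_Ioc] at dR
  have θL : ∀ x ∈ Ioo (-m) 0, θ x = 0 := fun x hx =>
    hDz x (hIL x (Ioo_subset_Ico_self hx)) (dL x hx)
  have θR : ∀ x ∈ Ioo 0 l, θ x = 0 := fun x hx =>
    hDz x (hIR x (Ioo_subset_Ioc_self hx)) (dR x hx)
  intro x hx
  rcases hx.1.eq_or_lt with h | h
  · rw [← h]; exact hθbc1
  rcases hx.2.eq_or_lt with h' | h'
  · rw [h']; exact hθbc2
  rcases lt_trichotomy x 0 with h0 | h0 | h0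
  · exact θL x ⟨h, h0⟩
  · rw [h0]
    refine tendsto_nhds_unique (hθ0.mono_left (nhdsWithin_le_nhds (s := Ioi 0))) ?_
    refine tendsto_const_nhds.congr' ?_
    filter_upwards [Ioo_mem_nhdsGT hl] with y hy using (θR y hy).symm
  · exact θR x ⟨h0, h'⟩

end RT14
end
end
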